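/- Let J be the 2T×2T block-diagonal antisymmetric matrix with T diagonal blocks [[0,1],[−1,0]], and let K be any 2T×2T antisymmetric matrix, viewed as a T×T array of 2×2 blocks K(u,t), u,t = 1,…,T. Then Pf(J + K) = 1 + Σ_{n=1}^T Σ_{𝔱: {1,…,n}↗{1,…,T}} Pf K_𝔱, where the inner sum is over strictly increasing maps 𝔱 from {1,…,n} to {1,…,T} and K_𝔱 is the 2n×2n antisymmetric matrix [K(𝔱(j), 𝔱(k))]_{j,k=1}^n formed from the corresponding 2×2 blocks of K. -/

import Mathlib

/-!
Expanding `Pf(J + K)` one diagonal block of `J` at a time: if `E_a` denotes the matrix whose only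
nonzero block is `[[0,1],[-1,0]]` at position `a`, then for every matrix `M` with block index set `S`
and `a ∈ S`,
`Pf_S(M + E_a) = Pf_S(M) + Pf_{S \ a}(M)` (`pfOn_add_unitBlock`). Indeed, since permutations are
injective, each product `∏ (M + E_a)(σ(i,0), σ(i,1))` contains at most one factor from `E_a`. Its
position `j` can be moved to `a` by an even block transposition (`sum_unitBlock_position`), which
gives a factor `|S|`, and the two orientations of the block give a factor `2`
(`sum_unitBlock_self`); together these turn the normalisation `2^|S| |S|!` into that of `S \ a`.

Since `J = ∑_a E_a`, induction gives `Pf(J + K) = ∑_B Pf_B(K)` over all sets `B` of blocks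
(`pfOn_add_sum_unitBlock`). Subsets of size `n` are the images of strictly increasing maps from
`Fin n`, and `Pf_B(K)` is the Pfaffian of the corresponding minor (`pfaffian_blockMinor`).
-/

open Matrix
open scoped Classical

/-- The Pfaffian of a `2n × 2n` matrix, defined by
`Pf(M) = (1/(2^n n!)) Σ_{σ ∈ S_{2n}} sgn(σ) ∏_{i=1}^n M_{σ(2i−1), σ(2i)}`;
the Pfaffian of the empty (0 × 0) matrix is 1. -/
noncomputable def pfaffian {F : Type*} [Field F] {n : ℕ} (M : Matrix (Fin (2*n)) (Fin (2*n)) F) : F :=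
  ((2:F)^n * (n.factorial : F))⁻¹ *
    ∑ σ : Equiv.Perm (Fin (2*n)), ((Equiv.Perm.sign σ : ℤ) : F) *
      ∏ i : Fin n, M (σ ⟨2*i.1, by have := i.2; omega⟩) (σ ⟨2*i.1+1, by have := i.2; omega⟩)

/-- The `2T × 2T` block-diagonal matrix `J` with `T` diagonal blocks `[[0,1],[−1,0]]`. -/
def Jmat (F : Type*) [Field F] (T : ℕ) : Matrix (Fin (2*T)) (Fin (2*T)) F := Matrix.of fun i j =>
  if j.1 = i.1 + 1 ∧ i.1 % 2 = 0 then (1:F)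
  else if i.1 = j.1 + 1 ∧ j.1 % 2 = 0 then -1 else 0

/-- The index of the `2 × 2`-block structure: given `𝔱 : Fin n → Fin T` and `i : Fin 2n`,
`blockIdx 𝔱 i = 2 𝔱(⌊i/2⌋) + (i mod 2) : Fin 2T`. -/
def blockIdx {n T : ℕ} (𝔱 : Fin n → Fin T) (i : Fin (2*n)) : Fin (2*T) :=
  ⟨2 * (𝔱 ⟨i.1/2, by have := i.2; omega⟩).1 + i.1 % 2,
    by have := (𝔱 ⟨i.1/2, by have := i.2; omega⟩).2; omega⟩

/-- The `2n × 2n` minor `K_𝔱 = [K(𝔱(j), 𝔱(k))]_{j,k=1}^n` of the `2T × 2T` matrix `K`,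
viewed as a `T × T` array of `2 × 2` blocks. -/
def blockMinor {F : Type*} [Field F] {n T : ℕ} (K : Matrix (Fin (2*T)) (Fin (2*T)) F)
    (𝔱 : Fin n → Fin T) : Matrix (Fin (2*n)) (Fin (2*n)) F :=
  Matrix.of fun i j => K (blockIdx 𝔱 i) (blockIdx 𝔱 j)

/-! ### The Pfaffian on a set of blocks and a single unit block -/

/-- The unnormalised Pfaffian of the blocks in `S`: the permutation sum over those permutations of
`ι × Fin 2` that fix every point lying over the complement of `S`. Keeping one ambient permutation
group for all `S` makes the passage from `S` to `S.erase a` a restriction of the index set. -/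
def pfSum {ι : Type*} [Fintype ι] [DecidableEq ι] (S : Finset ι)
    (M : ι × Fin 2 → ι × Fin 2 → ℂ) : ℂ :=
  ∑ σ : Equiv.Perm (ι × Fin 2) with (∀ x : ι × Fin 2, x.1 ∉ S → σ x = x),
    ((Equiv.Perm.sign σ : ℤ) : ℂ) * ∏ i ∈ S, M (σ (i, 0)) (σ (i, 1))

/-- The block-diagonal matrix with block `[[0,1],[-1,0]]` at position `a` and zeros elsewhere. -/
def unitBlock {ι : Type*} [DecidableEq ι] (a : ι) (x y : ι × Fin 2) : ℂ :=
  (if x = (a, 0) ∧ y = (a, 1) then 1 else 0) - (if x = (a, 1) ∧ y = (a, 0) then 1 else 0)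

/-- A product of sums in which at most one second summand is nonzero. -/
lemma prod_add_of_orthogonal {ι : Type*} [DecidableEq ι] (S : Finset ι) (m e : ι → ℂ)
    (he : ∀ i ∈ S, ∀ j ∈ S, e i ≠ 0 → e j ≠ 0 → i = j) :
    ∏ i ∈ S, (m i + e i) = ∏ i ∈ S, m i + ∑ j ∈ S, e j * ∏ i ∈ S.erase j, m i := by
  by_cases h : ∃ j ∈ S, e j ≠ 0
  · obtain ⟨j, hj, hej⟩ := h
    have h0 : ∀ i ∈ S, i ≠ j → e i = 0 := fun i hi hij => by
      by_contra h
      exact hij (he i hi j hj h hej)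
    rw [Finset.sum_eq_single_of_mem j hj (fun i hi hij => by rw [h0 i hi hij, zero_mul]),
      ← Finset.mul_prod_erase S _ hj, ← Finset.mul_prod_erase S m hj, add_mul]
    congr 2 <;>
    exact Finset.prod_congr rfl fun i hi => by
      rw [h0 i (Finset.mem_of_mem_erase hi) (Finset.ne_of_mem_erase hi), add_zero]
  · push Not at h
    rw [Finset.sum_eq_zero (fun j hj => by rw [h j hj, zero_mul]), add_zero]
    exact Finset.prod_congr rfl fun i hi => by rw [h i hi, add_zero]

/-- Right translation by a permutation supported over `S` preserves the index set of `pfSum`. -/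
lemma sum_fixing_mul_right {ι : Type*} [Fintype ι] [DecidableEq ι] (S : Finset ι)
    (τ : Equiv.Perm (ι × Fin 2)) (hτ : ∀ x : ι × Fin 2, x.1 ∉ S → τ x = x)
    (f : Equiv.Perm (ι × Fin 2) → ℂ) :
    ∑ σ : Equiv.Perm (ι × Fin 2) with (∀ x : ι × Fin 2, x.1 ∉ S → σ x = x), f (σ * τ) =
      ∑ σ : Equiv.Perm (ι × Fin 2) with (∀ x : ι × Fin 2, x.1 ∉ S → σ x = x), f σ := by
  refine Finset.sum_equiv (Equiv.mulRight τ) (fun σ => ?_) (fun σ _ => rfl)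
  simp only [Finset.mem_filter, Finset.mem_univ, true_and, Equiv.coe_mulRight,
    Equiv.Perm.mul_apply]
  refine forall_congr' fun x => imp_congr_right fun hx => ?_
  rw [hτ x hx]

/-- If one factor of the product is taken from a second matrix `E`, the position `j ∈ S` of that factor
does not affect the permutation sum: the block transposition exchanging `j` and `a` is even. -/
lemma sum_unitBlock_position {ι : Type*} [Fintype ι] [DecidableEq ι] (S : Finset ι)
    (M E : ι × Fin 2 → ι × Fin 2 → ℂ) {a j : ι} (ha : a ∈ S) (hj : j ∈ S) :
    ∑ σ : Equiv.Perm (ι × Fin 2) with (∀ x : ι × Fin 2, x.1 ∉ S → σ x = x),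
        ((Equiv.Perm.sign σ : ℤ) : ℂ) *
          (E (σ (j, 0)) (σ (j, 1)) * ∏ i ∈ S.erase j, M (σ (i, 0)) (σ (i, 1))) =
      ∑ σ : Equiv.Perm (ι × Fin 2) with (∀ x : ι × Fin 2, x.1 ∉ S → σ x = x),
        ((Equiv.Perm.sign σ : ℤ) : ℂ) *
          (E (σ (a, 0)) (σ (a, 1)) * ∏ i ∈ S.erase a, M (σ (i, 0)) (σ (i, 1))) := by
  by_cases hja : j = a
  · rw [hja]
  let τ : Equiv.Perm (ι × Fin 2) := Equiv.swap (j, 0) (a, 0) * Equiv.swap (j, 1) (a, 1)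
  have hτ : ∀ i b, τ (i, b) = (Equiv.swap j a i, b) := by
    intro i b
    simp only [τ, Equiv.Perm.mul_apply, Equiv.swap_apply_def]
    fin_cases b <;> by_cases h1 : i = j <;> by_cases h2 : i = a <;> simp_all
  have hsign : Equiv.Perm.sign τ = 1 := by
    simp only [τ, Equiv.Perm.sign_mul]
    rw [Equiv.Perm.sign_swap (by simpa using hja), Equiv.Perm.sign_swap (by simpa using hja)]
    rfl
  rw [← sum_fixing_mul_right S τ]
  · refine Finset.sum_congr rfl fun σ _ => ?_
    rw [Equiv.Perm.sign_mul, hsign, mul_one]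
    simp only [Equiv.Perm.mul_apply, hτ, Equiv.swap_apply_left]
    congr 2
    refine Finset.prod_equiv (Equiv.swap j a) (fun i => ?_) (fun i _ => rfl)
    simp only [Finset.mem_erase, Equiv.swap_apply_def]
    split_ifs <;> simp_all
  · rintro ⟨i, b⟩ hi
    rw [hτ, Equiv.swap_apply_of_ne_of_ne]
    · rintro rfl; exact hi hj
    · rintro rfl; exact hi ha

/-- With the unit block in position `a`, the permutation sum reduces to the one for `S.erase a`,
counted twice because both orientations of the block contribute equally. -/
lemma sum_unitBlock_self {ι : Type*} [Fintype ι] [DecidableEq ι] (S : Finset ι)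
    (M : ι × Fin 2 → ι × Fin 2 → ℂ) {a : ι} (ha : a ∈ S) :
    ∑ σ : Equiv.Perm (ι × Fin 2) with (∀ x : ι × Fin 2, x.1 ∉ S → σ x = x),
        ((Equiv.Perm.sign σ : ℤ) : ℂ) *
          (unitBlock a (σ (a, 0)) (σ (a, 1)) * ∏ i ∈ S.erase a, M (σ (i, 0)) (σ (i, 1))) =
      2 * pfSum (S.erase a) M := by
  let τ : Equiv.Perm (ι × Fin 2) := Equiv.swap (a, 0) (a, 1)
  have hτ : ∀ x : ι × Fin 2, x.1 ≠ a → τ x = x := fun x hx =>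
    Equiv.swap_apply_of_ne_of_ne (fun h => hx (by rw [h])) (fun h => hx (by rw [h]))
  have hsign : Equiv.Perm.sign τ = -1 := Equiv.Perm.sign_swap (by simp)
  have h1 : ∑ σ : Equiv.Perm (ι × Fin 2) with (∀ x : ι × Fin 2, x.1 ∉ S → σ x = x),
      ((Equiv.Perm.sign σ : ℤ) : ℂ) *
        ((if σ (a, 0) = (a, 0) ∧ σ (a, 1) = (a, 1) then 1 else 0) *
          ∏ i ∈ S.erase a, M (σ (i, 0)) (σ (i, 1))) = pfSum (S.erase a) M := by
    simp only [ite_mul, one_mul, zero_mul, mul_ite, mul_zero]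
    rw [← Finset.sum_filter, Finset.filter_filter, pfSum]
    refine Finset.sum_congr (Finset.filter_congr fun σ _ => ?_) (fun _ _ => rfl)
    constructor
    · rintro ⟨h, h0, h1⟩ ⟨i, b⟩ hi
      by_cases hia : i = a
      · subst hia
        fin_cases b
        · exact h0
        · exact h1
      · exact h _ fun hS => hi (Finset.mem_erase.2 ⟨hia, hS⟩)
    · intro h
      exact ⟨fun x hx => h x fun h' => hx (Finset.mem_of_mem_erase h'),
        h _ (by simp), h _ (by simp)⟩
  have h2 : ∑ σ : Equiv.Perm (ι × Fin 2) with (∀ x : ι × Fin 2, x.1 ∉ S → σ x = x),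
      ((Equiv.Perm.sign σ : ℤ) : ℂ) *
        ((if σ (a, 0) = (a, 1) ∧ σ (a, 1) = (a, 0) then 1 else 0) *
          ∏ i ∈ S.erase a, M (σ (i, 0)) (σ (i, 1))) = -pfSum (S.erase a) M := by
    rw [← h1, ← sum_fixing_mul_right S τ, ← Finset.sum_neg_distrib]
    · refine Finset.sum_congr rfl fun σ _ => ?_
      have hp : ∏ i ∈ S.erase a, M ((σ * τ) (i, 0)) ((σ * τ) (i, 1)) =
          ∏ i ∈ S.erase a, M (σ (i, 0)) (σ (i, 1)) :=
        Finset.prod_congr rfl fun i hi => by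
          have := Finset.ne_of_mem_erase hi
          rw [Equiv.Perm.mul_apply, Equiv.Perm.mul_apply, hτ _ this, hτ _ this]
      rw [hp, Equiv.Perm.sign_mul, hsign]
      simp only [τ, Equiv.Perm.mul_apply, Equiv.swap_apply_left, Equiv.swap_apply_right,
        and_comm (a := σ (a, 1) = (a, 1))]
      push_cast
      ring
    · exact fun x hx => hτ x (by rintro rfl; exact hx ha)
  simp only [unitBlock, sub_mul, mul_sub]
  rw [Finset.sum_sub_distrib, h1, h2]
  ring

lemma pfSum_add_unitBlock {ι : Type*} [Fintype ι] [DecidableEq ι] (S : Finset ι)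
    (M : ι × Fin 2 → ι × Fin 2 → ℂ) {a : ι} (ha : a ∈ S) :
    pfSum S (M + unitBlock a) = pfSum S M + S.card * (2 * pfSum (S.erase a) M) := by
  have key : ∀ σ : Equiv.Perm (ι × Fin 2),
      ∏ i ∈ S, (M + unitBlock a) (σ (i, 0)) (σ (i, 1)) =
        ∏ i ∈ S, M (σ (i, 0)) (σ (i, 1)) +
          ∑ j ∈ S, unitBlock a (σ (j, 0)) (σ (j, 1)) *
            ∏ i ∈ S.erase j, M (σ (i, 0)) (σ (i, 1)) := by
    intro σ
    refine prod_add_of_orthogonal S (fun i => M (σ (i, 0)) (σ (i, 1)))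
      (fun i => unitBlock a (σ (i, 0)) (σ (i, 1))) fun i _ j _ hi hj => ?_
    -- Only the position containing the preimage of `(a, 0)` sees the unit block.
    have hpre : ∀ i, unitBlock a (σ (i, 0)) (σ (i, 1)) ≠ 0 → (σ.symm (a, 0)).1 = i := by
      intro i hi
      by_contra hne
      refine hi ?_
      have h0 : σ (i, 0) ≠ (a, 0) := fun h => hne (by rw [← h]; simp)
      have h1 : σ (i, 1) ≠ (a, 0) := fun h => hne (by rw [← h]; simp)
      simp [unitBlock, h0, h1]
    rw [← hpre i hi, ← hpre j hj]
  unfold pfSum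
  simp only [key, mul_add, Finset.mul_sum, Finset.sum_add_distrib]
  congr 1
  rw [Finset.sum_comm, Finset.sum_congr rfl fun j hj => sum_unitBlock_position S M _ ha hj,
    Finset.sum_const, nsmul_eq_mul, sum_unitBlock_self S M ha, pfSum]
  simp only [Finset.mul_sum]

/-- The Pfaffian of the blocks in `S`. -/
noncomputable def pfOn {ι : Type*} [Fintype ι] [DecidableEq ι] (S : Finset ι)
    (M : ι × Fin 2 → ι × Fin 2 → ℂ) : ℂ :=
  ((2 : ℂ) ^ S.card * (S.card.factorial : ℂ))⁻¹ * pfSum S M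

lemma pfOn_add_unitBlock {ι : Type*} [Fintype ι] [DecidableEq ι] (S : Finset ι)
    (M : ι × Fin 2 → ι × Fin 2 → ℂ) {a : ι} (ha : a ∈ S) :
    pfOn S (M + unitBlock a) = pfOn S M + pfOn (S.erase a) M := by
  obtain ⟨k, hk⟩ : ∃ k, S.card = k + 1 :=
    Nat.exists_eq_succ_of_ne_zero (Finset.card_ne_zero_of_mem ha)
  have hk' : (S.erase a).card = k := by rw [Finset.card_erase_of_mem ha, hk]; rfl
  rw [pfOn, pfOn, pfOn, pfSum_add_unitBlock S M ha, hk, hk', Nat.factorial_succ]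
  have h1 : ((k : ℂ) + 1) ≠ 0 := by exact_mod_cast Nat.succ_ne_zero k
  have h2 : (k.factorial : ℂ) ≠ 0 := by exact_mod_cast Nat.factorial_ne_zero k
  push_cast
  field_simp
  ring

/-! ### Adding all unit blocks -/

lemma pfOn_add_sum_unitBlock {ι : Type*} [Fintype ι] [DecidableEq ι]
    (M : ι × Fin 2 → ι × Fin 2 → ℂ) (A : Finset ι) :
    ∀ S : Finset ι, A ⊆ S →
      pfOn S (M + ∑ a ∈ A, unitBlock a) = ∑ B ∈ A.powerset, pfOn (S \ B) M := by
  induction A using Finset.induction_on with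
  | empty => intro S _; simp
  | insert a A ha ih =>
    intro S hS
    have haS : a ∈ S := hS (Finset.mem_insert_self a A)
    have hAS : A ⊆ S := (Finset.subset_insert a A).trans hS
    have hA' : A ⊆ S.erase a := fun x hx =>
      Finset.mem_erase.2 ⟨by rintro rfl; exact ha hx, hAS hx⟩
    rw [Finset.sum_insert ha, add_comm (unitBlock a), ← add_assoc, pfOn_add_unitBlock _ _ haS,
      ih S hAS, ih _ hA', Finset.sum_powerset_insert ha]
    congr 1
    refine Finset.sum_congr rfl fun B _ => ?_
    congr 1
    ext x
    simp only [Finset.mem_sdiff, Finset.mem_erase, Finset.mem_insert]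
    tauto

/-! ### Comparison with the minors of a `2T × 2T` matrix -/

/-- The index `2 i + b` in `Fin (2 * T)` of the `b`-th position in the `i`-th block. -/
def pairIdx {T : ℕ} (x : Fin T × Fin 2) : Fin (2 * T) :=
  ⟨2 * x.1.1 + x.2.1, by have := x.1.2; have := x.2.2; omega⟩

/-- The entries of a `2T × 2T` matrix, indexed by block and position within the block. -/
def pairMat {T : ℕ} (K : Matrix (Fin (2*T)) (Fin (2*T)) ℂ) (x y : Fin T × Fin 2) : ℂ :=
  K (pairIdx x) (pairIdx y)

/-- The indices of the minor selected by an injective `t`, identified with the points lying over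
the image of `t`. -/
noncomputable def minorEquiv {n T : ℕ} (t : Fin n → Fin T) (ht : Function.Injective t) :
    Fin (2 * n) ≃ {x : Fin T × Fin 2 // x.1 ∈ Finset.univ.image t} :=
  Equiv.ofBijective
    (fun i => ⟨(t ⟨i.1 / 2, by have := i.2; omega⟩, ⟨i.1 % 2, by omega⟩),
      Finset.mem_image_of_mem t (Finset.mem_univ _)⟩) (by
    constructor
    · intro i j h
      simp only [Subtype.mk.injEq, Prod.mk.injEq, Fin.mk.injEq] at h
      have := Fin.mk.inj_iff.1 (ht h.1)
      ext
      omega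
    · rintro ⟨⟨x, b⟩, hx⟩
      obtain ⟨i, -, rfl⟩ := Finset.mem_image.1 hx
      refine ⟨⟨2 * i.1 + b.1, by have := i.2; have := b.2; omega⟩, ?_⟩
      have hb := b.2
      simp only [Subtype.mk.injEq, Prod.mk.injEq]
      refine ⟨congrArg t (Fin.ext ?_), Fin.ext ?_⟩ <;> simp only <;> omega)

lemma pairIdx_minorEquiv {n T : ℕ} (t : Fin n → Fin T) (ht : Function.Injective t)
    (i : Fin (2 * n)) : pairIdx (minorEquiv t ht i).1 = blockIdx t i := rfl

/-- The Pfaffian of a block minor depends only on the set of selected blocks. Each permutation of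
the minor's indices is extended by the identity to all indices. -/
lemma pfaffian_blockMinor {n T : ℕ} (K : Matrix (Fin (2*T)) (Fin (2*T)) ℂ) (t : Fin n → Fin T)
    (ht : Function.Injective t) :
    pfaffian (n := n) (blockMinor K t) = pfOn (Finset.univ.image t) (pairMat K) := by
  have hcard : (Finset.univ.image t).card = n := by
    rw [Finset.card_image_of_injective _ ht, Finset.card_univ, Fintype.card_fin]
  rw [pfaffian, pfOn, hcard, pfSum]
  congr 1
  let e := minorEquiv t ht
  refine Finset.sum_bij (fun σ _ => σ.extendDomain e) ?_ ?_ ?_ ?_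
  · intro σ _
    simp only [Finset.mem_filter, Finset.mem_univ, true_and]
    exact fun x hx => Equiv.Perm.extendDomain_apply_not_subtype σ e hx
  · intro σ _ τ _ h
    exact Equiv.Perm.extendDomainHom_injective e h
  · intro ρ hρ
    simp only [Finset.mem_filter, Finset.mem_univ, true_and] at hρ
    have hmem : ∀ x : Fin T × Fin 2, x.1 ∈ Finset.univ.image t ↔ (ρ x).1 ∈ Finset.univ.image t := by
      intro x
      by_cases hx : x.1 ∈ Finset.univ.image t
      · refine iff_of_true hx ?_
        by_contra h
        have := ρ.injective (hρ _ h)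
        rw [this] at h
        exact h hx
      · rw [hρ x hx]
    refine ⟨(e.trans ((ρ.subtypePerm fun x => (hmem x).symm).trans e.symm)), Finset.mem_univ _, ?_⟩
    ext1 x
    by_cases hx : x.1 ∈ Finset.univ.image t
    · rw [Equiv.Perm.extendDomain_apply_subtype _ e hx]
      simp
    · rw [Equiv.Perm.extendDomain_apply_not_subtype _ e hx, hρ x hx]
  · intro σ _
    rw [Equiv.Perm.sign_extendDomain, Finset.prod_image (fun _ _ _ _ h => ht h)]
    congr 1
    refine Finset.prod_congr rfl fun i _ => ?_
    have h0 : ((t i, 0) : Fin T × Fin 2) = (e ⟨2 * i.1, by have := i.2; omega⟩).1 := by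
      refine Prod.ext (congrArg t (Fin.ext ?_)) (Fin.ext ?_)
      · change i.1 = 2 * i.1 / 2
        omega
      · change 0 = 2 * i.1 % 2
        omega
    have h1 : ((t i, 1) : Fin T × Fin 2) = (e ⟨2 * i.1 + 1, by have := i.2; omega⟩).1 := by
      refine Prod.ext (congrArg t (Fin.ext ?_)) (Fin.ext ?_)
      · change i.1 = (2 * i.1 + 1) / 2
        omega
      · change 1 = (2 * i.1 + 1) % 2
        omega
    rw [h0, h1, Equiv.Perm.extendDomain_apply_image, Equiv.Perm.extendDomain_apply_image]
    rfl

lemma blockMinor_id {T : ℕ} (K : Matrix (Fin (2*T)) (Fin (2*T)) ℂ) : blockMinor K id = K := by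
  have : ∀ i : Fin (2*T), blockIdx id i = i := fun i => Fin.ext (by simp [blockIdx]; omega)
  ext i j
  simp [blockMinor, this]

lemma pairMat_Jmat_add {T : ℕ} (K : Matrix (Fin (2*T)) (Fin (2*T)) ℂ) :
    pairMat (Jmat ℂ T + K) = pairMat K + ∑ a : Fin T, unitBlock a := by
  ext ⟨i, b⟩ ⟨j, c⟩
  have hs : ∑ a : Fin T, unitBlock a (i, b) (j, c) =
      unitBlock i (i, b) (j, c) := by
    refine Finset.sum_eq_single_of_mem i (Finset.mem_univ _) fun a _ ha => ?_
    simp [unitBlock, ha.symm]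
  simp only [pairMat, Matrix.add_apply, Pi.add_apply, Finset.sum_apply, hs]
  rw [add_comm]
  congr 1
  have hij : j = i ↔ j.1 = i.1 := Fin.ext_iff
  fin_cases b <;> fin_cases c <;> simp [Jmat, pairIdx, unitBlock, hij] <;>
    split_ifs <;> first | rfl | omega | exact neg_zero.symm

/-- Strictly increasing maps into `Fin T` correspond to their images, so the sum over them is a
sum over subsets of a given size. -/
lemma sum_strictMono_eq {T : ℕ} (n : ℕ) (g : Finset (Fin T) → ℂ) :
    ∑ t : {f : Fin n → Fin T // StrictMono f}, g (Finset.univ.image t.1) =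
      ∑ B ∈ (Finset.univ : Finset (Fin T)).powersetCard n, g B := by
  refine Finset.sum_bij (fun t _ => Finset.univ.image t.1) ?_ ?_ ?_ (fun _ _ => rfl)
  · intro t _
    rw [Finset.mem_powersetCard_univ, Finset.card_image_of_injective _ t.2.injective,
      Finset.card_univ, Fintype.card_fin]
  · intro s _ t _ h
    refine Subtype.ext ((StrictMono.range_inj s.2 t.2).1 ?_)
    simpa using congrArg (fun B : Finset (Fin T) => (B : Set (Fin T))) h
  · intro B hB
    rw [Finset.mem_powersetCard_univ] at hB
    exact ⟨⟨B.orderEmbOfFin hB, (B.orderEmbOfFin hB).strictMono⟩, Finset.mem_univ _, by simp⟩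

/-- **The Pfaffian minor expansion:**  for any `2T × 2T` antisymmetric `K`,
`Pf(J + K) = 1 + Σ_{n=1}^T Σ_{𝔱: n↗T} Pf K_𝔱`, the inner sum running over strictly
increasing maps `𝔱 : {1,…,n} → {1,…,T}`. -/
theorem pfaffian_J_add (T : ℕ) (K : Matrix (Fin (2*T)) (Fin (2*T)) ℂ) (hK : Kᵀ = -K) :
    pfaffian (n := T) (Jmat ℂ T + K)
      = 1 + ∑ n ∈ Finset.Icc 1 T, ∑ 𝔱 : {f : Fin n → Fin T // StrictMono f},
          pfaffian (n := n) (blockMinor K 𝔱.1) := by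
  rw [← blockMinor_id (Jmat ℂ T + K), pfaffian_blockMinor _ _ Function.injective_id,
    pairMat_Jmat_add, Finset.image_id,
    pfOn_add_sum_unitBlock (pairMat K) Finset.univ _ (Finset.Subset.refl _)]
  have hcompl : ∑ B ∈ (Finset.univ : Finset (Fin T)).powerset, pfOn (Finset.univ \ B) (pairMat K) =
      ∑ B ∈ (Finset.univ : Finset (Fin T)).powerset, pfOn B (pairMat K) :=
    Finset.sum_bij' (fun B _ => Finset.univ \ B) (fun B _ => Finset.univ \ B)
      (by simp) (by simp) (by simp) (by simp) (fun _ _ => rfl)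
  have hempty : pfOn (∅ : Finset (Fin T)) (pairMat K) = 1 := by
    have : (Finset.univ.filter fun σ : Equiv.Perm (Fin T × Fin 2) =>
        ∀ x : Fin T × Fin 2, x.1 ∉ (∅ : Finset (Fin T)) → σ x = x) = {1} := by
      ext σ
      simp [Equiv.ext_iff]
    rw [pfOn, pfSum, this]
    simp
  have hsum : ∀ n, ∑ 𝔱 : {f : Fin n → Fin T // StrictMono f},
      pfaffian (n := n) (blockMinor K 𝔱.1) =
        ∑ B ∈ (Finset.univ : Finset (Fin T)).powersetCard n, pfOn B (pairMat K) := fun n => by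
    rw [← sum_strictMono_eq n fun B => pfOn B (pairMat K)]
    exact Finset.sum_congr rfl fun t _ => pfaffian_blockMinor K t.1 t.2.injective
  rw [hcompl, Finset.sum_powerset, Finset.card_univ, Fintype.card_fin, Finset.sum_range_succ',
    add_comm]
  simp only [hsum, Finset.powersetCard_zero, Finset.sum_singleton, hempty]
  rw [Finset.range_eq_Ico, Finset.sum_Ico_add' (fun n => ∑ B ∈
    (Finset.univ : Finset (Fin T)).powersetCard n, pfOn B (pairMat K)) 0 T 1]
  rfl
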